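/- The curves C : y² = x⁵ and C̃ : y² = x³ in ℂ², as germs at the origin, are not bi-Lipschitz homeomorphic (as germs of metric spaces with the Euclidean outer metric). -/

import Mathlib

open Metric

/-- The curve `y² = x⁵` in `ℂ²`. -/
def curveC : Set (EuclideanSpace ℂ (Fin 2)) := {p | (p 1) ^ 2 = (p 0) ^ 5}

/-- The curve `y² = x³` in `ℂ²`. -/
def curveCt : Set (EuclideanSpace ℂ (Fin 2)) := {p | (p 1) ^ 2 = (p 0) ^ 3}

/-- `(X,0)` and `(Y,0)` are bi-`α`-Hölder homeomorphic as germs. -/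
def BiHolderGerm (X Y : Set (EuclideanSpace ℂ (Fin 2))) (α : ℝ) : Prop :=
  ∃ (U V : Set (EuclideanSpace ℂ (Fin 2))) (F : EuclideanSpace ℂ (Fin 2) → EuclideanSpace ℂ (Fin 2)) (c : ℝ),
    IsOpen U ∧ IsOpen V ∧ (0 : EuclideanSpace ℂ (Fin 2)) ∈ U ∧ (0 : EuclideanSpace ℂ (Fin 2)) ∈ V ∧
    0 < c ∧ F 0 = 0 ∧ Set.BijOn F (X ∩ U) (Y ∩ V) ∧
    ∀ p ∈ X ∩ U, ∀ q ∈ X ∩ U,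
      (1 / c) * ‖p - q‖ ^ (1 / α) ≤ ‖F p - F q‖ ∧ ‖F p - F q‖ ≤ c * ‖p - q‖ ^ α

theorem aux_norm_le (v : EuclideanSpace ℂ (Fin 2)) : ‖v‖ ≤ ‖v 0‖ + ‖v 1‖ := by
  rw [EuclideanSpace.norm_eq, Fin.sum_univ_two]
  apply Real.sqrt_le_iff.2
  constructor
  · positivity
  · nlinarith [norm_nonneg (v 0), norm_nonneg (v 1), mul_nonneg (norm_nonneg (v 0)) (norm_nonneg (v 1))]

theorem aux_le_norm (v : EuclideanSpace ℂ (Fin 2)) (i : Fin 2) : ‖v i‖ ≤ ‖v‖ :=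
  PiLp.norm_apply_le v i

theorem aux_param (a b : ℂ) (h : b ^ 2 = a ^ 3) : ∃ s : ℂ, a = s ^ 2 ∧ b = s ^ 3 := by
  by_cases ha : a = 0
  · subst ha
    refine ⟨0, by simp, ?_⟩
    simpa using h
  · refine ⟨b / a, ?_, ?_⟩
    · rw [div_pow, h]; field_simp
    · rw [div_pow, pow_succ b 2, h]; field_simp

theorem aux_choose (c r1 r2 : ℝ) (h1 : 0 < r1) (h2 : 0 < r2) :
    ∃ t : ℝ, 0 < t ∧ t < 1 ∧ 2 * t < r1 ∧ (40 * c ^ 2 + 2 * c) * t < r2 ∧ 2 * c * t < 1 ∧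
      40 * c ^ 3 * t < 1 := by
  have key : ∀ k r : ℝ, 0 < r → ∀ᶠ t : ℝ in nhdsWithin 0 (Set.Ioi 0), k * t < r := by
    intro k r hr
    have : Filter.Tendsto (fun t : ℝ => k * t) (nhdsWithin 0 (Set.Ioi 0)) (nhds (k * 0)) :=
      (Continuous.tendsto (by fun_prop) 0).mono_left nhdsWithin_le_nhds
    rw [mul_zero] at this
    exact this.eventually (gt_mem_nhds hr)
  have := ((key 1 1 one_pos).and ((key 2 r1 h1).and ((key (40 * c ^ 2 + 2 * c) r2 h2).and
    ((key (2 * c) 1 one_pos).and ((key (40 * c ^ 3) 1 one_pos).and self_mem_nhdsWithin))))).exists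
  obtain ⟨t, ha, hb, hc, hd, he, hf⟩ := this
  exact ⟨t, hf, by simpa using ha, hb, hc, hd, he⟩

theorem aux_path (s w : ℂ) (hs : ‖s‖ ≤ 1) (hw : ‖w‖ ≤ 1) :
    ‖w ^ 2 - s ^ 2‖ + ‖w ^ 3 - s ^ 3‖ ≤ 5 * ‖w - s‖ := by
  have e1 : w ^ 2 - s ^ 2 = (w + s) * (w - s) := by ring
  have e2 : w ^ 3 - s ^ 3 = (w * w + w * s + s * s) * (w - s) := by ring
  rw [e1, e2, norm_mul, norm_mul]
  have b1 : ‖w + s‖ ≤ 2 := by linarith [norm_add_le w s]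
  have b2 : ‖w * w + w * s + s * s‖ ≤ 3 := by
    have := norm_add₃_le (a := w * w) (b := w * s) (c := s * s)
    rw [norm_mul, norm_mul, norm_mul] at this
    nlinarith [norm_nonneg w, norm_nonneg s]
  nlinarith [norm_nonneg (w - s)]

theorem aux_close (s s' : ℂ) (c t : ℝ) (hc : 0 < c) (ht : 0 < t) (hs' : ‖s'‖ ≤ 1)
    (hl : t ^ 2 ≤ 2 * c * ‖s‖ ^ 2)
    (h2 : ‖s ^ 2 - s' ^ 2‖ ≤ 2 * c * t ^ 5) (h3 : ‖s ^ 3 - s' ^ 3‖ ≤ 2 * c * t ^ 5) :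
    ‖s' - s‖ ≤ 8 * c ^ 2 * t ^ 3 := by
  have e : s ^ 2 * (s' - s) = s' * (s ^ 2 - s' ^ 2) - (s ^ 3 - s' ^ 3) := by ring
  have h := norm_sub_le (s' * (s ^ 2 - s' ^ 2)) (s ^ 3 - s' ^ 3)
  rw [← e, norm_mul, norm_mul, norm_pow] at h
  have h4 : ‖s‖ ^ 2 * ‖s' - s‖ ≤ 4 * c * t ^ 5 := by
    nlinarith [norm_nonneg (s ^ 2 - s' ^ 2)]
  have h5 : t ^ 2 * ‖s' - s‖ ≤ t ^ 2 * (8 * c ^ 2 * t ^ 3) := by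
    calc t ^ 2 * ‖s' - s‖ ≤ 2 * c * ‖s‖ ^ 2 * ‖s' - s‖ := by gcongr
      _ = 2 * c * (‖s‖ ^ 2 * ‖s' - s‖) := by ring
      _ ≤ 2 * c * (4 * c * t ^ 5) := by gcongr
      _ = _ := by ring
  exact le_of_mul_le_mul_left h5 (by positivity)

/-- The germs at `0` of `y² = x⁵` and `y² = x³` are not bi-Lipschitz homeomorphic. -/
theorem not_biLipschitz : ¬ BiHolderGerm curveC curveCt 1 := by
  rintro ⟨U, V, F, c, hU, hV, h0U, h0V, hc, hF0, hbij, hF⟩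
  simp only [div_one, Real.rpow_one] at hF
  obtain ⟨r1, hr1, hB1⟩ := Metric.isOpen_iff.1 hU 0 h0U
  obtain ⟨r2, hr2, hB2⟩ := Metric.isOpen_iff.1 hV 0 h0V
  obtain ⟨t, ht, ht1, hta, htb, htc, htd⟩ := aux_choose c r1 r2 hr1 hr2
  have inU : ∀ v : EuclideanSpace ℂ (Fin 2), ‖v‖ < r1 → v ∈ U := fun v hv => hB1 (by simpa using hv)
  have inV : ∀ v : EuclideanSpace ℂ (Fin 2), ‖v‖ < r2 → v ∈ V := fun v hv => hB2 (by simpa using hv)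
  have t2 : t ^ 2 ≤ t := by nlinarith
  have t3 : t ^ 3 ≤ t ^ 2 := pow_le_pow_of_le_one ht.le ht1.le (by norm_num)
  have t5 : t ^ 5 ≤ t ^ 2 := pow_le_pow_of_le_one ht.le ht1.le (by norm_num)
  have hlow : ∀ p ∈ curveC ∩ U, ∀ q ∈ curveC ∩ U, ‖p - q‖ ≤ c * ‖F p - F q‖ := by
    intro p hp q hq
    have := (hF p hp q hq).1
    rw [one_div, inv_mul_le_iff₀ hc] at this
    exact this
  have h0 : (0 : EuclideanSpace ℂ (Fin 2)) ∈ curveC ∩ U := ⟨by simp [curveC], h0U⟩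
  -- the facts for a point `(t², ±t⁵)`
  have hpt : ∀ y : ℂ, y ^ 2 = (t : ℂ) ^ 10 → ‖y‖ = t ^ 5 →
      (!₂[(t : ℂ) ^ 2, y] : EuclideanSpace ℂ (Fin 2)) ∈ curveC ∩ U ∧
      ∃ s : ℂ, F !₂[(t : ℂ) ^ 2, y] = !₂[s ^ 2, s ^ 3] ∧ ‖s‖ ≤ 1 ∧ t ^ 2 ≤ 2 * c * ‖s‖ ^ 2 ∧
        ‖F !₂[(t : ℂ) ^ 2, y]‖ ≤ 2 * c * t ^ 2 := by
    intro y hy hny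
    set p : EuclideanSpace ℂ (Fin 2) := !₂[(t : ℂ) ^ 2, y] with hp
    have p0 : ‖p 0‖ = t ^ 2 := by simp [hp]
    have p1 : ‖p 1‖ = t ^ 5 := by simpa [hp] using hny
    have hpn : ‖p‖ ≤ 2 * t ^ 2 := by linarith [aux_norm_le p]
    have hpU : p ∈ curveC ∩ U := by
      refine ⟨?_, inU _ (by linarith)⟩
      simp only [curveC, hp, Set.mem_ofPred_eq]
      simp [hy]; ring
    refine ⟨hpU, ?_⟩
    have hY := (hbij.mapsTo hpU).1
    obtain ⟨s, hs0, hs1⟩ := aux_param _ _ hY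
    have hFe : F p = !₂[s ^ 2, s ^ 3] := by
      ext i; fin_cases i
      · simpa using hs0
      · simpa using hs1
    have hup : ‖F p‖ ≤ 2 * c * t ^ 2 := by
      have := (hF p hpU 0 h0).2
      rw [hF0, sub_zero, sub_zero] at this
      nlinarith
    have hs2 : ‖s‖ ^ 2 ≤ 2 * c * t ^ 2 := by
      have := aux_le_norm (F p) 0
      rw [hs0, norm_pow] at this
      linarith
    have hsle : ‖s‖ ≤ 1 := by
      have : 2 * c * t ^ 2 ≤ 2 * c * t := by gcongr
      nlinarith [norm_nonneg s]
    refine ⟨s, hFe, hsle, ?_, hup⟩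
    have h1 := hlow p hpU 0 h0
    rw [hF0, sub_zero, sub_zero] at h1
    have h2 := aux_norm_le (F p)
    rw [hs0, hs1, norm_pow, norm_pow] at h2
    have h3 : ‖s‖ ^ 3 ≤ ‖s‖ ^ 2 := pow_le_pow_of_le_one (norm_nonneg s) hsle (by norm_num)
    calc t ^ 2 ≤ ‖p‖ := by rw [← p0]; exact aux_le_norm p 0
      _ ≤ c * ‖F p‖ := h1
      _ ≤ c * (2 * ‖s‖ ^ 2) := by gcongr; linarith
      _ = _ := by ring
  obtain ⟨hp, s, hFs, hs1, hsl, hFn⟩ := hpt ((t : ℂ) ^ 5) (by ring) (by simp [abs_of_pos ht])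
  obtain ⟨hp', s', hFs', hs1', -, -⟩ := hpt (-(t : ℂ) ^ 5) (by ring) (by simp [abs_of_pos ht])
  set p : EuclideanSpace ℂ (Fin 2) := !₂[(t : ℂ) ^ 2, (t : ℂ) ^ 5] with hpd
  set p' : EuclideanSpace ℂ (Fin 2) := !₂[(t : ℂ) ^ 2, -(t : ℂ) ^ 5] with hpd'
  have hpp : ‖p - p'‖ ≤ 2 * t ^ 5 := by
    refine (aux_norm_le _).trans ?_
    have : (t : ℂ) ^ 5 + (t : ℂ) ^ 5 = 2 * (t : ℂ) ^ 5 := by ring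
    simp [hpd, hpd', this, abs_of_pos ht]
  have hFF : ‖F p - F p'‖ ≤ 2 * c * t ^ 5 := by
    have := (hF p hp p' hp').2
    nlinarith
  have hclose : ‖s' - s‖ ≤ 8 * c ^ 2 * t ^ 3 := by
    apply aux_close s s' c t hc ht hs1' hsl
    · have := aux_le_norm (F p - F p') 0
      rw [hFs, hFs'] at this hFF
      simp only [PiLp.sub_apply] at this
      simp at this
      linarith
    · have := aux_le_norm (F p - F p') 1
      rw [hFs, hFs'] at this hFF
      simp only [PiLp.sub_apply] at this
      simp at this
      linarith
  -- the path
  let w : unitInterval → ℂ := fun u => s + ((u : ℝ) : ℂ) * (s' - s)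
  have hwc : Continuous w := by fun_prop
  have hwn : ∀ u, ‖w u‖ ≤ 1 := by
    intro u
    have e : w u = ((1 - (u : ℝ) : ℝ) : ℂ) * s + ((u : ℝ) : ℂ) * s' := by
      simp only [w]; push_cast; ring
    rw [e]
    refine (norm_add_le _ _).trans ?_
    rw [norm_mul, norm_mul, Complex.norm_real, Complex.norm_real, Real.norm_of_nonneg u.2.1,
      Real.norm_of_nonneg (by linarith [u.2.2])]
    nlinarith [u.2.1, u.2.2]
  have hws : ∀ u, ‖w u - s‖ ≤ 8 * c ^ 2 * t ^ 3 := by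
    intro u
    have e : w u - s = ((u : ℝ) : ℂ) * (s' - s) := by simp only [w]; ring
    rw [e, norm_mul, Complex.norm_real, Real.norm_of_nonneg u.2.1]
    nlinarith [u.2.1, u.2.2, norm_nonneg (s' - s)]
  let γ : unitInterval → EuclideanSpace ℂ (Fin 2) := fun u => !₂[w u ^ 2, w u ^ 3]
  have hγc : Continuous γ := by
    apply (PiLp.continuous_toLp 2 _).comp
    apply continuous_pi
    intro i
    fin_cases i
    · exact hwc.pow 2
    · exact hwc.pow 3
  have hγd : ∀ u, ‖γ u - F p‖ ≤ 40 * c ^ 2 * t ^ 3 := by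
    intro u
    have h1 := aux_norm_le (γ u - F p)
    have h2 := aux_path s (w u) hs1 (hwn u)
    have h3 : ‖(γ u - F p) 0‖ = ‖w u ^ 2 - s ^ 2‖ := by rw [hFs]; simp [γ]
    have h4 : ‖(γ u - F p) 1‖ = ‖w u ^ 3 - s ^ 3‖ := by rw [hFs]; simp [γ]
    linarith [hws u]
  have hγV : ∀ u, γ u ∈ curveCt ∩ V := by
    intro u
    refine ⟨?_, inV _ ?_⟩
    · simp only [curveCt, γ, Set.mem_ofPred_eq]
      simp; ring
    · have h1 : ‖γ u‖ ≤ ‖γ u - F p‖ + ‖F p‖ := by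
        simpa using norm_add_le (γ u - F p) (F p)
      have h2 := hγd u
      have h3 : 40 * c ^ 2 * t ^ 3 ≤ 40 * c ^ 2 * t := by gcongr; linarith
      have h4 : 2 * c * t ^ 2 ≤ 2 * c * t := by gcongr
      linarith
  choose q hq hqF using fun u => hbij.surjOn (hγV u)
  have hqc : Continuous q := by
    rw [continuous_iff_continuousAt]
    intro u
    rw [ContinuousAt, tendsto_iff_norm_sub_tendsto_zero]
    refine squeeze_zero (g := fun v => c * ‖γ v - γ u‖) (fun _ => norm_nonneg _) (fun v => ?_) ?_
    · have := hlow _ (hq v) _ (hq u)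
      rwa [hqF, hqF] at this
    · have h : Continuous fun v => c * ‖γ v - γ u‖ := by fun_prop
      simpa using h.tendsto u
  have hq0 : q 0 = p := by
    apply hbij.injOn (hq 0) hp
    rw [hqF, hFs]; simp [γ, w]
  have hq1 : q 1 = p' := by
    apply hbij.injOn (hq 1) hp'
    rw [hqF, hFs']; simp [γ, w]
  have hre : ∀ u, 0 < (q u 0).re := by
    intro u
    have h1 := hlow _ (hq u) _ hp
    rw [hqF] at h1
    have h2 : ‖q u 0 - (t : ℂ) ^ 2‖ ≤ ‖q u - p‖ := by
      have := aux_le_norm (q u - p) 0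
      simpa [hpd] using this
    have h3 : ‖q u 0 - (t : ℂ) ^ 2‖ < t ^ 2 := by
      calc _ ≤ c * ‖γ u - F p‖ := h2.trans h1
        _ ≤ c * (40 * c ^ 2 * t ^ 3) := by gcongr; exact hγd u
        _ = (40 * c ^ 3 * t) * t ^ 2 := by ring
        _ < 1 * t ^ 2 := by gcongr
        _ = t ^ 2 := one_mul _
    have h4 := (abs_le.1 (Complex.abs_re_le_norm (q u 0 - (t : ℂ) ^ 2))).1
    have h5 : ((t : ℂ) ^ 2).re = t ^ 2 := by rw [← Complex.ofReal_pow, Complex.ofReal_re]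
    rw [Complex.sub_re, h5] at h4
    linarith
  have hne : ∀ u, q u 0 ≠ 0 := by
    intro u h
    have := hre u
    rw [h] at this
    simp at this
  have hcoord : ∀ i, Continuous fun u => q u i := fun i => by fun_prop
  have hh : Continuous fun u => (q u 1 / (q u 0) ^ 2).re :=
    Complex.continuous_re.comp ((hcoord 1).div ((hcoord 0).pow 2) fun u => pow_ne_zero 2 (hne u))
  have htne : (t : ℂ) ≠ 0 := by exact_mod_cast ht.ne'
  have e0 : (q 0 1 / (q 0 0) ^ 2).re = t := by
    have : q 0 1 / (q 0 0) ^ 2 = (t : ℂ) := by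
      rw [hq0]; simp [hpd]; field_simp
    rw [this, Complex.ofReal_re]
  have e1 : (q 1 1 / (q 1 0) ^ 2).re = -t := by
    have : q 1 1 / (q 1 0) ^ 2 = ((-t : ℝ) : ℂ) := by
      rw [hq1]; simp [hpd']; field_simp
    rw [this, Complex.ofReal_re]
  obtain ⟨u, hu⟩ := mem_range_of_exists_le_of_exists_ge hh (c := (0 : ℝ))
    ⟨1, by rw [e1]; linarith⟩ ⟨0, by rw [e0]; exact ht.le⟩
  have hsq : (q u 1 / (q u 0) ^ 2) ^ 2 = q u 0 := by
    have h := (hq u).1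
    simp only [curveC, Set.mem_ofPred_eq] at h
    rw [div_pow, h]
    have := hne u
    field_simp
  have := hre u
  rw [← hsq, pow_two, Complex.mul_re] at this
  simp only at hu
  rw [hu] at this
  nlinarith [sq_nonneg ((q u 1 / (q u 0) ^ 2).im)]
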